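/- arXiv:2112.13902 — 2 statements merged into one kernel-verified Lean document; each statement's English description precedes it below -/
import Mathlib

section
/- Let n ≥ 1, d ≥ 1, let P be a polynomial of degree at most d on {-1,1}^n with E|P(X)|^2 = 1 (X uniform on {-1,1}^n), and let A ⊆ {-1,1}^n be non-empty with relative size ε = #A / 2^n. Then for every real q ≥ 3, (1/#A) · Σ_{x∈A} |P(x)|^2 ≤ 2 · ε^{-2/q} · q^d. -/
open Classical

/-- Expectation with respect to the uniform measure on the discrete cube `{-1,1}^n`,
encoded as `Fin n → Bool` (`true ↦ 1`, `false ↦ -1`). -/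
noncomputable def cubeE (n : ℕ) (f : (Fin n → Bool) → ℝ) : ℝ :=
  (∑ x : Fin n → Bool, f x) / 2 ^ n

/-- The real value of a coordinate of the cube: `true ↦ 1`, `false ↦ -1`. -/
def cubeSign (b : Bool) : ℝ := if b then 1 else -1

/-- `P` is (the restriction to the cube of) a multilinear polynomial of degree at most `d`:
`P x = ∑_{#S ≤ d} a_S ∏_{i ∈ S} x_i`. -/
def IsPolyDeg (n d : ℕ) (P : (Fin n → Bool) → ℝ) : Prop :=
  ∃ a : Finset (Fin n) → ℝ,
    (∀ S : Finset (Fin n), d < S.card → a S = 0) ∧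
    ∀ x, P x = ∑ S : Finset (Fin n), a S * ∏ i ∈ S, cubeSign (x i)

/-- Probability (uniform measure) of a set of points of the cube. -/
noncomputable def cubePr (n : ℕ) (A : Set (Fin n → Bool)) : ℝ :=
  (∑ x : Fin n → Bool, if x ∈ A then (1 : ℝ) else 0) / 2 ^ n

/-- `a` is an `e^{-r}`-quantile of `P(X)`:
`ℙ(P(X) ≥ a) ≥ e^{-r}` and `ℙ(P(X) ≤ a) ≥ 1 - e^{-r}`. -/
def IsQuantile (n : ℕ) (P : (Fin n → Bool) → ℝ) (r a : ℝ) : Prop :=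
  Real.exp (-r) ≤ cubePr n {x | a ≤ P x} ∧ 1 - Real.exp (-r) ≤ cubePr n {x | P x ≤ a}

/-- Discrete partial derivative: `∂_i f(x) = (f(T_i^1 x) - f(T_i^{-1} x))/2`. -/
noncomputable def discDeriv (n : ℕ) (f : (Fin n → Bool) → ℝ) (i : Fin n)
    (x : Fin n → Bool) : ℝ :=
  (f (Function.update x i true) - f (Function.update x i false)) / 2

/-- Squared norm of the discrete gradient: `|∇f(x)|² = ∑_i |∂_i f(x)|²`. -/
noncomputable def gradSq (n : ℕ) (f : (Fin n → Bool) → ℝ) (x : Fin n → Bool) : ℝ :=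
  ∑ i : Fin n, (discDeriv n f i x) ^ 2

theorem two_pt_step (r : ℝ) (hr : 0 ≤ r)
    (W : ∀ b : ℝ, 0 ≤ b → b ≤ 1 → (1+b)^r + (1-b)^r ≤ 2 * (1+(r+1)*b^2)^(r/2)) :
    ∀ b : ℝ, 0 ≤ b → b ≤ 1 → (1+b)^(r+2) + (1-b)^(r+2) ≤ 2 * (1+(r+1)*b^2)^(r/2+1) := by
  have hU : ∀ b : ℝ, 0 < 1 + (r+1)*b^2 := fun b => by positivity
  have dU : ∀ b : ℝ, HasDerivAt (fun b : ℝ => 1 + (r+1)*b^2) (2*(r+1)*b) b := fun b => by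
    have := (((hasDerivAt_id b).pow 2).const_mul (r+1)).const_add 1
    refine this.congr_deriv ?_
    simp; ring
  have dp : ∀ b : ℝ, HasDerivAt (fun b : ℝ => 1 + b) 1 b := fun b =>
    (hasDerivAt_id b).const_add 1
  have dm : ∀ b : ℝ, HasDerivAt (fun b : ℝ => 1 - b) (-1) b := fun b =>
    (hasDerivAt_id b).const_sub 1
  have dH : ∀ b : ℝ, HasDerivAt
      (fun b : ℝ => 2*(r+1)*b*(1+(r+1)*b^2)^(r/2) - (1+b)^(r+1) + (1-b)^(r+1))
      (2*(r+1)*(1+(r+1)*b^2)^(r/2) + 2*(r+1)*b*((2*(r+1)*b)*(r/2)*(1+(r+1)*b^2)^(r/2-1))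
        - (r+1)*((1+b)^r + (1-b)^r)) b := fun b => by
    have h1 := ((hasDerivAt_id b).const_mul (2*(r+1))).mul
      ((dU b).rpow_const (p := r/2) (Or.inl (hU b).ne'))
    have h2 := (dp b).rpow_const (p := r+1) (Or.inr (by linarith))
    have h3 := (dm b).rpow_const (p := r+1) (Or.inr (by linarith))
    refine ((h1.sub h2).add h3).congr_deriv ?_
    simp only [add_sub_cancel_right, id]
    ring
  have dG : ∀ b : ℝ, HasDerivAt
      (fun b : ℝ => 2*(1+(r+1)*b^2)^(r/2+1) - (1+b)^(r+2) - (1-b)^(r+2))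
      ((r+2)*(2*(r+1)*b*(1+(r+1)*b^2)^(r/2) - (1+b)^(r+1) + (1-b)^(r+1))) b := fun b => by
    have h1 := ((dU b).rpow_const (p := r/2+1) (Or.inl (hU b).ne')).const_mul 2
    have h2 := (dp b).rpow_const (p := r+2) (Or.inr (by linarith))
    have h3 := (dm b).rpow_const (p := r+2) (Or.inr (by linarith))
    refine ((h1.sub h2).sub h3).congr_deriv ?_
    have e : r + 2 - 1 = r + 1 := by ring
    simp only [add_sub_cancel_right, e]
    ring
  have mH : MonotoneOn (fun b : ℝ => 2*(r+1)*b*(1+(r+1)*b^2)^(r/2) - (1+b)^(r+1) + (1-b)^(r+1))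
      (Set.Icc 0 1) := by
    refine monotoneOn_of_deriv_nonneg (convex_Icc 0 1)
      (fun b _ => (dH b).continuousAt.continuousWithinAt)
      (fun b _ => (dH b).differentiableAt.differentiableWithinAt) ?_
    intro b hb
    rw [interior_Icc] at hb
    rw [(dH b).deriv]
    have hw := W b hb.1.le hb.2.le
    have h0 : 0 ≤ 2*(r+1)*b*((2*(r+1)*b)*(r/2)*(1+(r+1)*b^2)^(r/2-1)) := by
      have := hb.1.le
      have := hU b
      positivity
    have := mul_le_mul_of_nonneg_left hw (by linarith : 0 ≤ r+1)
    linarith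
  have mG : MonotoneOn (fun b : ℝ => 2*(1+(r+1)*b^2)^(r/2+1) - (1+b)^(r+2) - (1-b)^(r+2))
      (Set.Icc 0 1) := by
    refine monotoneOn_of_deriv_nonneg (convex_Icc 0 1)
      (fun b _ => (dG b).continuousAt.continuousWithinAt)
      (fun b _ => (dG b).differentiableAt.differentiableWithinAt) ?_
    intro b hb
    rw [interior_Icc] at hb
    rw [(dG b).deriv]
    have := mH (Set.left_mem_Icc.2 zero_le_one) ⟨hb.1.le, hb.2.le⟩ hb.1.le
    simp at this
    refine mul_nonneg (by linarith) ?_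
    linarith
  intro b h0 h1
  have := mG (Set.left_mem_Icc.2 zero_le_one) ⟨h0, h1⟩ h0
  norm_num at this
  linarith

theorem two_pt_weak (k : ℕ) : ∀ r : ℝ, 0 ≤ r → r ≤ 2*k+2 →
    ∀ b : ℝ, 0 ≤ b → b ≤ 1 → (1+b)^r + (1-b)^r ≤ 2 * (1+(r+1)*b^2)^(r/2) := by
  induction k with
  | zero =>
    intro r hr hr2 b h0 h1
    have hc0 := Real.concaveOn_rpow (p := r/2) (by linarith) (by norm_num at hr2; linarith)
    have hc := hc0.2 (Set.mem_Ici.2 (sq_nonneg (1+b))) (Set.mem_Ici.2 (sq_nonneg (1-b)))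
      (by norm_num : (0:ℝ) ≤ 1/2) (by norm_num : (0:ℝ) ≤ 1/2) (by norm_num)
    simp only [smul_eq_mul] at hc
    have e1 : ((1+b)^2)^(r/2) = (1+b)^r := by
      rw [← Real.rpow_natCast, ← Real.rpow_mul (by linarith)]; congr 1; push_cast; ring
    have e2 : ((1-b)^2)^(r/2) = (1-b)^r := by
      rw [← Real.rpow_natCast, ← Real.rpow_mul (by linarith)]; congr 1; push_cast; ring
    rw [e1, e2] at hc
    have : (1/2*(1+b)^2 + 1/2*(1-b)^2)^(r/2) ≤ (1+(r+1)*b^2)^(r/2) := by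
      apply Real.rpow_le_rpow (by positivity) _ (by linarith)
      nlinarith [mul_nonneg hr (sq_nonneg b)]
    linarith
  | succ k ih =>
    intro r hr hr2 b h0 h1
    by_cases h : r ≤ 2*k+2
    · exact ih r hr h b h0 h1
    · have hk : (0:ℝ) ≤ k := Nat.cast_nonneg k
      push_cast at hr2
      have := two_pt_step (r-2) (by linarith) (ih (r-2) (by linarith) (by linarith)) b h0 h1
      have e : (r-2)/2+1 = r/2 := by ring
      rw [e, sub_add_cancel] at this
      refine this.trans ?_
      have : (1+(r-2+1)*b^2)^(r/2) ≤ (1+(r+1)*b^2)^(r/2) := by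
        have h3 : 0 ≤ r-2+1 := by linarith
        apply Real.rpow_le_rpow (by positivity) _ (by linarith)
        nlinarith [sq_nonneg b]
      linarith

theorem two_pt_pos (p : ℝ) (hp : 1 ≤ p) (a b : ℝ) (hb : 0 ≤ b) (hba : b ≤ a) :
    ((a+b)^2)^p + ((a-b)^2)^p ≤ 2 * (a^2 + 2*p*b^2)^p := by
  rcases (hb.trans hba).eq_or_lt with h | h
  · have : b = 0 := by linarith
    subst h; subst this
    simp [Real.zero_rpow (by linarith : p ≠ 0)]
  have ha2 : 0 < a^2 := by positivity
  obtain ⟨k, hk⟩ := exists_nat_ge (2*p)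
  have hs := two_pt_step (2*p-2) (by linarith)
    (two_pt_weak k (2*p-2) (by linarith) (by linarith)) (b/a) (by positivity)
    ((div_le_one h).2 hba)
  have e : (2*p-2)/2+1 = p := by ring
  rw [e, sub_add_cancel] at hs
  have hle : b/a ≤ 1 := (div_le_one h).2 hba
  have hnn : 0 ≤ b/a := by positivity
  have e1 : ((a+b)^2)^p = (a^2)^p * (1+b/a)^(2*p) := by
    rw [Real.rpow_mul (by linarith), ← Real.mul_rpow ha2.le (by positivity)]
    congr 1; norm_num; field_simp
  have e2 : ((a-b)^2)^p = (a^2)^p * (1-b/a)^(2*p) := by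
    rw [Real.rpow_mul (by linarith), ← Real.mul_rpow ha2.le (Real.rpow_nonneg (by linarith) _)]
    congr 1; norm_num; field_simp
  have e3 : (a^2)^p * (1+(2*p-2+1)*(b/a)^2)^p ≤ (a^2+2*p*b^2)^p := by
    have : 0 ≤ 2*p-2+1 := by linarith
    rw [← Real.mul_rpow ha2.le (by positivity)]
    apply Real.rpow_le_rpow (by positivity) _ (by linarith)
    have : a^2*(1+(2*p-2+1)*(b/a)^2) = a^2 + (2*p-1)*b^2 := by field_simp; ring
    rw [this]; nlinarith [sq_nonneg b]
  rw [e1, e2]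
  have := mul_le_mul_of_nonneg_left hs (Real.rpow_nonneg ha2.le p)
  linarith

theorem two_pt (p : ℝ) (hp : 1 ≤ p) (a b : ℝ) :
    ((a+b)^2)^p + ((a-b)^2)^p ≤ 2 * (a^2 + 2*p*b^2)^p := by
  have key : ((a+b)^2)^p + ((a-b)^2)^p
      = ((|a|+|b|)^2)^p + ((|a|-|b|)^2)^p := by
    rcases abs_cases a with ⟨h, _⟩ | ⟨h, _⟩ <;> rcases abs_cases b with ⟨h', _⟩ | ⟨h', _⟩ <;>
      rw [h, h']
    · rw [add_comm]; congr 3 <;> ring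
    · rw [add_comm]; congr 2 <;> ring
    · congr 2 <;> ring
  rw [key, ← sq_abs a, ← sq_abs b]
  rcases le_total |b| |a| with h | h
  · exact two_pt_pos p hp _ _ (abs_nonneg b) h
  · have := two_pt_pos p hp _ _ (abs_nonneg a) h
    rw [add_comm |b|, ← neg_sub |a|, neg_sq] at this
    refine this.trans ?_
    gcongr 2 * ?_
    apply Real.rpow_le_rpow (by positivity) _ (by linarith)
    have : |a|^2 ≤ |b|^2 := pow_le_pow_left₀ (abs_nonneg a) h 2
    nlinarith

theorem sum_flip (n : ℕ) (i : Fin n) (F : (Fin n → Bool) → ℝ) :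
    ∑ x, F (Function.update x i (!x i)) = ∑ x, F x := by
  have hinv : Function.Involutive (fun x : Fin n → Bool => Function.update x i (!x i)) := by
    intro x; simp
  exact Equiv.sum_comp hinv.toPerm F

theorem hyper (n : ℕ) (p : ℝ) (hp : 1 ≤ p) (s : Finset (Fin n)) :
    ∀ (d : ℕ) (a : Finset (Fin n) → ℝ), (∀ S, d < S.card → a S = 0) →
      (∑ x : Fin n → Bool, ((∑ S ∈ s.powerset, a S * ∏ i ∈ S, cubeSign (x i))^2)^p)^(1/p) ≤
       (2^n : ℝ)^(1/p-1) * (2*p)^d *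
        ∑ x : Fin n → Bool, (∑ S ∈ s.powerset, a S * ∏ i ∈ S, cubeSign (x i))^2 := by
  have hp0 : 0 < p := by linarith
  induction s using Finset.induction_on with
  | empty =>
    intro d a ha
    simp only [Finset.powerset_empty, Finset.sum_singleton, Finset.prod_empty, mul_one,
      Finset.sum_const, Finset.card_univ, Fintype.card_fun, Fintype.card_bool, Fintype.card_fin,
      nsmul_eq_mul]
    push_cast
    rw [Real.mul_rpow (by positivity) (by positivity), ← Real.rpow_mul (by positivity),
      mul_one_div_cancel hp0.ne', Real.rpow_one, Real.rpow_sub_one (by positivity)]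
    have : (1:ℝ) ≤ (2*p)^d := one_le_pow₀ (by linarith)
    have h2 : (2^n:ℝ)^(1/p)/2^n * (2*p)^d * (2^n * a ∅^2) = ((2^n:ℝ)^(1/p) * a ∅^2)*(2*p)^d := by
      field_simp
    rw [h2]
    exact le_mul_of_one_le_right (by positivity) this
  | insert i s hi ih =>
    intro d a ha
    set g : (Fin n → Bool) → ℝ := fun x => ∑ S ∈ s.powerset, a S * ∏ i ∈ S, cubeSign (x i) with hg
    set a' : Finset (Fin n) → ℝ := fun S => if i ∈ S then 0 else a (insert i S) with ha'
    set h : (Fin n → Bool) → ℝ := fun x => ∑ S ∈ s.powerset, a' S * ∏ i ∈ S, cubeSign (x i) with hh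
    have split : ∀ x : Fin n → Bool, ∑ S ∈ (insert i s).powerset, a S * ∏ i ∈ S, cubeSign (x i)
        = g x + cubeSign (x i) * h x := by
      intro x
      rw [Finset.sum_powerset_insert hi, hg, hh, Finset.mul_sum]
      congr 1
      refine Finset.sum_congr rfl fun S hS => ?_
      have : i ∉ S := fun hc => hi (Finset.mem_powerset.1 hS hc)
      rw [Finset.prod_insert this, ha']
      simp only [this, if_false]; ring
    simp only [split]
    have flipinv : ∀ (c : Finset (Fin n) → ℝ) (x : Fin n → Bool),
        ∑ S ∈ s.powerset, c S * ∏ j ∈ S, cubeSign (Function.update x i (!x i) j)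
          = ∑ S ∈ s.powerset, c S * ∏ j ∈ S, cubeSign (x j) := by
      intro c x
      refine Finset.sum_congr rfl fun S hS => ?_
      congr 1
      refine Finset.prod_congr rfl fun j hj => ?_
      have : j ≠ i := fun hc => hi (Finset.mem_powerset.1 hS (hc ▸ hj))
      rw [Function.update_of_ne this]
    have gf : ∀ x, g (Function.update x i (!x i)) = g x := flipinv a
    have hf : ∀ x, h (Function.update x i (!x i)) = h x := flipinv a'
    have sf : ∀ x : Fin n → Bool, cubeSign (Function.update x i (!x i) i) = - cubeSign (x i) := by
      intro x; simp only [Function.update_self]; cases x i <;> simp [cubeSign]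
    have sgn : ∀ x : Fin n → Bool, cubeSign (x i)^2 = 1 := by
      intro x; cases x i <;> simp [cubeSign]
    -- averaging
    have avg : ∀ Φ : ℝ → ℝ, 2 * ∑ x, Φ (g x + cubeSign (x i) * h x)
        = ∑ x, (Φ (g x + cubeSign (x i) * h x) + Φ (g x - cubeSign (x i) * h x)) := by
      intro Φ
      have := sum_flip n i (fun x => Φ (g x + cubeSign (x i) * h x))
      simp only [gf, hf, sf, neg_mul, ← sub_eq_add_neg] at this
      rw [Finset.sum_add_distrib, this]; ring
    have L2 : ∑ x, (g x + cubeSign (x i) * h x)^2 = ∑ x, g x^2 + ∑ x, h x^2 := by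
      have := avg (fun t => t^2)
      have e : ∀ x, (g x + cubeSign (x i) * h x)^2 + (g x - cubeSign (x i) * h x)^2
          = 2 * (g x^2 + h x^2) := by
        intro x; linear_combination (2 * h x^2) * sgn x
      simp only [e] at this
      rw [← Finset.mul_sum, Finset.sum_add_distrib] at this
      linarith
    have LP : ∑ x, ((g x + cubeSign (x i) * h x)^2)^p ≤ ∑ x, (g x^2 + 2*p*h x^2)^p := by
      have := avg (fun t => (t^2)^p)
      have e : ∑ x, (((g x + cubeSign (x i) * h x)^2)^p + ((g x - cubeSign (x i) * h x)^2)^p)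
          ≤ ∑ x, 2 * (g x^2 + 2*p*h x^2)^p := by
        refine Finset.sum_le_sum fun x _ => ?_
        have := two_pt p hp (g x) (cubeSign (x i) * h x)
        rwa [mul_pow, sgn, one_mul] at this
      rw [← Finset.mul_sum] at e
      linarith
    have mink := Real.Lp_add_le_of_nonneg (s := Finset.univ) (f := fun x => g x^2)
      (g := fun x => 2*p*h x^2) hp (fun x _ => by positivity) (fun x _ => by positivity)
    have scal : (∑ x, (2*p*h x^2)^p)^(1/p) = 2*p*(∑ x, (h x^2)^p)^(1/p) := by
      have : ∀ x, (2*p*h x^2)^p = (2*p)^p*(h x^2)^p := fun x =>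
        Real.mul_rpow (by positivity) (by positivity)
      simp only [this]
      rw [← Finset.mul_sum, Real.mul_rpow (by positivity)
        (Finset.sum_nonneg fun x _ => Real.rpow_nonneg (sq_nonneg _) _),
        ← Real.rpow_mul (by positivity), mul_one_div_cancel hp0.ne', Real.rpow_one]
    have top : (∑ x, ((g x + cubeSign (x i) * h x)^2)^p)^(1/p)
        ≤ (∑ x, (g x^2)^p)^(1/p) + 2*p*(∑ x, (h x^2)^p)^(1/p) := by
      rw [← scal]
      refine le_trans ?_ mink
      exact Real.rpow_le_rpow (Finset.sum_nonneg fun x _ => Real.rpow_nonneg (sq_nonneg _) _) LP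
        (by positivity)
    have Ig := ih d a ha
    rw [L2]
    refine top.trans ?_
    cases d with
    | zero =>
      have hz : ∀ x, h x = 0 := by
        intro x
        refine Finset.sum_eq_zero fun S hS => ?_
        have : i ∉ S := fun hc => hi (Finset.mem_powerset.1 hS hc)
        simp [ha', this, ha (insert i S) (by simp [this])]
      simp only [hz]
      simp only [ne_eq, OfNat.ofNat_ne_zero, not_false_eq_true, zero_pow, Real.zero_rpow hp0.ne',
        Finset.sum_const_zero, Real.zero_rpow (one_div_pos.2 hp0).ne', mul_zero, add_zero]
      exact Ig
    | succ d =>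
      have Ih := ih d a' (by
        intro S hS
        simp only [ha']
        split_ifs with hc
        · rfl
        · exact ha _ (by rw [Finset.card_insert_of_notMem hc]; omega))
      have := mul_le_mul_of_nonneg_left Ih (by positivity : 0 ≤ 2*p)
      rw [mul_add]
      refine add_le_add Ig (this.trans (le_of_eq ?_))
      rw [pow_succ]; ring

/-- For `A` of relative size `ε` and `q ≥ 3`, if `E|P(X)|² = 1` then
`(1/#A) ∑_{x ∈ A} |P(x)|² ≤ 2 ε^{-2/q} q^d`. -/
theorem restricted_second_moment_q (n d : ℕ) (hn : 1 ≤ n) (hd : 1 ≤ d)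
    (P : (Fin n → Bool) → ℝ) (hP : IsPolyDeg n d P)
    (hnorm : cubeE n (fun x => (P x) ^ 2) = 1)
    (A : Finset (Fin n → Bool)) (hA : A.Nonempty) :
    ∀ q : ℝ, 3 ≤ q →
      (∑ x ∈ A, (P x) ^ 2) / (A.card : ℝ) ≤
        2 * ((A.card : ℝ) / 2 ^ n) ^ (-2 / q) * q ^ d := by
  intro q hq
  obtain ⟨a, ha, hPa⟩ := hP
  have hp : 1 ≤ q/2 := by linarith
  have hy := hyper n (q/2) hp Finset.univ d a ha
  simp only [Finset.powerset_univ, ← hPa] at hy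
  have hN : (0:ℝ) < 2^n := by positivity
  have hsum : ∑ x, (P x)^2 = 2^n := by
    unfold cubeE at hnorm
    rwa [div_eq_one_iff_eq hN.ne'] at hnorm
  have hm : (0:ℝ) < A.card := by exact_mod_cast hA.card_pos
  have e1 : 2*(q/2) = q := by ring
  have e2 : 1/(q/2) = 2/q := by field_simp
  rw [hsum, e1, e2] at hy
  have hold := Real.rpow_sum_le_const_mul_sum_rpow_of_nonneg (s := A) (f := fun x => (P x)^2)
    hp (fun x _ => by positivity)
  have hsub : ∑ x ∈ A, ((P x)^2)^(q/2) ≤ ∑ x, ((P x)^2)^(q/2) :=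
    Finset.sum_le_sum_of_subset_of_nonneg (Finset.subset_univ _)
      fun x _ _ => Real.rpow_nonneg (sq_nonneg _) _
  have hS : 0 ≤ ∑ x ∈ A, (P x)^2 := Finset.sum_nonneg fun x _ => sq_nonneg _
  have hT : 0 ≤ ∑ x, ((P x)^2)^(q/2) := Finset.sum_nonneg fun x _ => Real.rpow_nonneg (sq_nonneg _) _
  have h1 : ∑ x ∈ A, (P x)^2 ≤ (A.card:ℝ)^(1-2/q) * (∑ x, ((P x)^2)^(q/2))^(2/q) := by
    have h := Real.rpow_le_rpow (by positivity)
      (hold.trans (mul_le_mul_of_nonneg_left hsub (by positivity))) (by positivity : 0 ≤ 2/q)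
    rw [← Real.rpow_mul hS, Real.mul_rpow (by positivity) hT, ← Real.rpow_mul hm.le] at h
    have e3 : q/2*(2/q) = 1 := by field_simp
    have e4 : (q/2-1)*(2/q) = 1-2/q := by field_simp
    rwa [e3, e4, Real.rpow_one] at h
  have h2 := h1.trans (mul_le_mul_of_nonneg_left hy (by positivity))
  rw [div_le_iff₀ hm]
  have e5 : ((A.card:ℝ)/2^n)^(-2/q) = (A.card:ℝ)^(-(2/q)) * (2^n:ℝ)^(2/q) := by
    rw [Real.div_rpow hm.le hN.le, neg_div, Real.rpow_neg hN.le (2/q), div_inv_eq_mul]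
  have e6 : (A.card:ℝ)^(1-2/q) = (A.card:ℝ)^(-(2/q)) * A.card := by
    rw [sub_eq_neg_add, Real.rpow_add hm, Real.rpow_one]
  rw [e6, Real.rpow_sub_one hN.ne'] at h2
  rw [e5]
  refine h2.trans ?_
  have hX : 0 ≤ (A.card:ℝ)^(-(2/q)) * (2^n:ℝ)^(2/q) * q^d * A.card := by positivity
  have e7 : (A.card:ℝ)^(-(2/q)) * A.card * ((2^n:ℝ)^(2/q)/2^n * q^d * 2^n)
      = (A.card:ℝ)^(-(2/q)) * (2^n:ℝ)^(2/q) * q^d * A.card := by field_simp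
  rw [e7]
  linarith
end

section
/- There exists a universal constant C > 0 such that the following holds. Let n ≥ 1, d ≥ 1, let P be a polynomial of degree at most d on {-1,1}^n, let X be uniformly distributed on {-1,1}^n, let r ≥ 1, let a_r and a_{r+1} be e^{-r}- and e^{-(r+1)}-quantiles of P(X) with a_{r+1} > a_r, let U = {x ∈ {-1,1}^n : P(x) > a_r} with ε = #U / 2^n, and set h(x) = max(P(x) - a_r, 0). Then E[h^2(X)] · |log ε| ≤ ε · C^d · max{1, (|log ε| / d)^{d-1}} · E|P(X)|^2. -/
open Classical

theorem tp_aux (Q R c : ℝ) (k : ℕ) (hc : 4 * (k:ℝ) ≤ c) :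
    0 ≤ Q * R * (((Q+R)^(2*k) - (Q-R)^(2*k))/2) ∧
    Q * R * (((Q+R)^(2*k) - (Q-R)^(2*k))/2) ≤ 2 * k * R^2 * (((Q+R)^(2*k) + (Q-R)^(2*k))/2) ∧
    ((Q+R)^(2*k) + (Q-R)^(2*k))/2 ≤ (Q^2 + c * R^2)^k := by
  induction k with
  | zero => simp
  | succ k ih =>
    push_cast at hc
    obtain ⟨h0, h1, h2⟩ := ih (by linarith)
    have hc0 : 0 ≤ c := by have : (0:ℝ) ≤ k := Nat.cast_nonneg k
                           linarith
    have hA0 : 0 ≤ ((Q+R)^(2*k) + (Q-R)^(2*k))/2 := by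
      have := (even_two_mul k).pow_nonneg (Q+R)
      have := (even_two_mul k).pow_nonneg (Q-R)
      linarith
    have eA : ((Q+R)^(2*(k+1)) + (Q-R)^(2*(k+1)))/2 = (Q^2+R^2) * (((Q+R)^(2*k) + (Q-R)^(2*k))/2)
      + 2 * (Q * R * (((Q+R)^(2*k) - (Q-R)^(2*k))/2)) := by ring
    have eB : Q * R * (((Q+R)^(2*(k+1)) - (Q-R)^(2*(k+1)))/2) =
      (Q^2+R^2) * (Q * R * (((Q+R)^(2*k) - (Q-R)^(2*k))/2)) +
      2 * Q^2 * R^2 * (((Q+R)^(2*k) + (Q-R)^(2*k))/2) := by ring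
    rw [eA, eB]
    generalize (((Q+R)^(2*k) + (Q-R)^(2*k))/2) = A at *
    generalize (Q * R * (((Q+R)^(2*k) - (Q-R)^(2*k))/2)) = B at *
    have hQ := sq_nonneg Q
    have hR := sq_nonneg R
    have hk : (0:ℝ) ≤ k := Nat.cast_nonneg k
    refine ⟨by positivity, ?_, ?_⟩
    · push_cast
      have t1 := mul_le_mul_of_nonneg_left h1 (add_nonneg hQ hR)
      have t2 : 0 ≤ R^2 * R^2 * A := by positivity
      have t3 : 0 ≤ (k+1) * R^2 * B := by positivity
      nlinarith
    · calc (Q^2+R^2) * A + 2 * B ≤ (Q^2+c*R^2) * A := by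
            have : 0 ≤ R^2 * A := by positivity
            nlinarith
        _ ≤ (Q^2+c*R^2) * (Q^2+c*R^2)^k := by gcongr
        _ = _ := by ring

theorem ls_two (p q : ℝ) (hp : 0 ≤ p) (hq : 0 ≤ q) :
    (p * Real.log p + q * Real.log q)/2 - ((p+q)/2) * Real.log ((p+q)/2) ≤
      p + q - 2 * (√p * √q) := by
  rcases eq_or_lt_of_le (add_nonneg hp hq) with h | h
  · have h1 : p = 0 := by linarith
    have h2 : q = 0 := by linarith
    simp [h1, h2]
  set m := (p+q)/2 with hm
  have hm0 : 0 < m := by linarith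
  have key : ∀ t : ℝ, 0 ≤ t → t * Real.log t - t * Real.log m ≤ t * (t/m - 1) := by
    intro t ht
    rcases eq_or_lt_of_le ht with h | h
    · simp [← h]
    · rw [← mul_sub, ← Real.log_div h.ne' hm0.ne']
      exact mul_le_mul_of_nonneg_left (Real.log_le_sub_one_of_pos (by positivity)) ht
  have k1 := key p hp
  have k2 := key q hq
  have e : (p * (p/m-1) + q*(q/m-1))/2 ≤ p + q - 2 * (√p * √q) := by
    obtain ⟨a, ha, rfl⟩ : ∃ a, 0 ≤ a ∧ p = a^2 := ⟨√p, Real.sqrt_nonneg _, (Real.sq_sqrt hp).symm⟩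
    obtain ⟨b, hb, rfl⟩ : ∃ a, 0 ≤ a ∧ q = a^2 := ⟨√q, Real.sqrt_nonneg _, (Real.sq_sqrt hq).symm⟩
    rw [Real.sqrt_sq ha, Real.sqrt_sq hb]
    have : (a^2 * (a^2/m-1) + b^2*(b^2/m-1))/2 = ((a^2-b^2)^2/4)/m := by
      field_simp
      rw [hm]; ring
    rw [this, div_le_iff₀ hm0, hm]
    nlinarith [mul_nonneg (sq_nonneg (a-b)) (sq_nonneg (a-b))]
  have e3 : m * Real.log m = (p * Real.log m + q * Real.log m)/2 := by
    rw [← add_mul, mul_div_right_comm]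
  linarith

theorem cubeE_succ (n : ℕ) (f : (Fin (n+1) → Bool) → ℝ) :
    cubeE (n+1) f = (cubeE n (fun x => f (Fin.cons true x)) + cubeE n (fun x => f (Fin.cons false x)))/2 := by
  unfold cubeE
  rw [← (Fin.consEquiv (fun _ : Fin (n+1) => Bool)).sum_comp, Fintype.sum_prod_type]
  simp [Fin.consEquiv]
  ring

theorem cubeE_mono {n : ℕ} {f g : (Fin n → Bool) → ℝ} (h : ∀ x, f x ≤ g x) : cubeE n f ≤ cubeE n g := by
  unfold cubeE
  gcongr
  exact h _

theorem cubeE_add {n : ℕ} (f g : (Fin n → Bool) → ℝ) :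
    cubeE n (fun x => f x + g x) = cubeE n f + cubeE n g := by
  unfold cubeE
  rw [Finset.sum_add_distrib, add_div]

theorem cubeE_mul {n : ℕ} (c : ℝ) (f : (Fin n → Bool) → ℝ) :
    cubeE n (fun x => c * f x) = c * cubeE n f := by
  unfold cubeE
  rw [← Finset.mul_sum, mul_div_assoc]

theorem cubeE_nonneg {n : ℕ} {f : (Fin n → Bool) → ℝ} (h : ∀ x, 0 ≤ f x) : 0 ≤ cubeE n f := by
  unfold cubeE
  exact div_nonneg (Finset.sum_nonneg fun x _ => h x) (by positivity)

theorem cubeE_cs {n : ℕ} (f g : (Fin n → Bool) → ℝ) :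
    cubeE n (fun x => f x * g x) ≤ √(cubeE n (fun x => f x^2)) * √(cubeE n (fun x => g x^2)) := by
  rw [← Real.sqrt_mul (cubeE_nonneg fun x => sq_nonneg _)]
  apply Real.le_sqrt_of_sq_le
  unfold cubeE
  rw [div_pow, div_mul_div_comm, ← sq]
  gcongr
  exact Finset.sum_mul_sq_le_sq_mul_sq _ _ _

theorem logsob (n : ℕ) : ∀ f : (Fin n → Bool) → ℝ,
    cubeE n (fun x => f x^2 * Real.log (f x^2)) -
      cubeE n (fun x => f x^2) * Real.log (cubeE n (fun x => f x^2)) ≤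
    4 * ∑ i, cubeE n (fun x => (discDeriv n f i x)^2) := by
  induction n with
  | zero => intro f; simp [cubeE]
  | succ n ih =>
    intro f
    have i1 := ih (fun x => f (Fin.cons true x))
    have i0 := ih (fun x => f (Fin.cons false x))
    rw [cubeE_succ, cubeE_succ n (fun x => f x^2), Fin.sum_univ_succ]
    have e0 : 4 * cubeE (n+1) (fun x => (discDeriv (n+1) f 0 x)^2) =
        cubeE n (fun x => f (Fin.cons true x)^2) + cubeE n (fun x => f (Fin.cons false x)^2)
         - 2 * cubeE n (fun x => f (Fin.cons true x) * f (Fin.cons false x)) := by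
      rw [cubeE_succ]
      simp only [discDeriv, Fin.update_cons_zero]
      have := cubeE_add (n := n) (fun x => 4 * ((f (Fin.cons true x) - f (Fin.cons false x))/2)^2)
        (fun x => 2 * (f (Fin.cons true x) * f (Fin.cons false x)))
      rw [cubeE_mul, cubeE_mul] at this
      have h2 := cubeE_add (n := n) (fun x => f (Fin.cons true x)^2) (fun x => f (Fin.cons false x)^2)
      have h3 : (fun x : Fin n → Bool => 4 * ((f (Fin.cons true x) - f (Fin.cons false x))/2)^2 +
        2 * (f (Fin.cons true x) * f (Fin.cons false x))) =
        (fun x => f (Fin.cons true x)^2 + f (Fin.cons false x)^2) := by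
        funext x; ring
      rw [h3] at this
      linarith
    have es : ∀ i : Fin n, cubeE (n+1) (fun x => (discDeriv (n+1) f i.succ x)^2) =
        (cubeE n (fun x => (discDeriv n (fun x => f (Fin.cons true x)) i x)^2) +
        cubeE n (fun x => (discDeriv n (fun x => f (Fin.cons false x)) i x)^2))/2 := by
      intro i
      rw [cubeE_succ]
      simp only [discDeriv, Fin.cons_update]
    rw [Finset.sum_congr rfl fun i _ => es i, ← Finset.sum_div, Finset.sum_add_distrib, mul_add, e0]
    have cs := cubeE_cs (fun x => f (Fin.cons true x)) (fun x => f (Fin.cons false x))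
    have l2 := ls_two (cubeE n (fun x => f (Fin.cons true x)^2)) (cubeE n (fun x => f (Fin.cons false x)^2))
      (cubeE_nonneg fun x => sq_nonneg _) (cubeE_nonneg fun x => sq_nonneg _)
    linarith

theorem cubeE_flip {n : ℕ} (i : Fin n) (f : (Fin n → Bool) → ℝ) :
    cubeE n f = cubeE n (fun x => (f (Function.update x i true) + f (Function.update x i false))/2) := by
  have hinv : Function.Involutive (fun x : Fin n → Bool => Function.update x i (!(x i))) := by
    intro x; simp
  have h : ∑ x, f x = ∑ x, f (Function.update x i (!(x i))) :=
    (Equiv.sum_comp hinv.toPerm f).symm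
  unfold cubeE
  congr 1
  have : ∀ x : Fin n → Bool, (f (Function.update x i true) + f (Function.update x i false))/2
      = (f x + f (Function.update x i (!(x i))))/2 := by
    intro x
    cases hx : x i
    · have : Function.update x i false = x := by rw [← hx]; simp
      rw [this]; simp [add_comm]
    · have : Function.update x i true = x := by rw [← hx]; simp
      rw [this]; simp
  rw [Finset.sum_congr rfl fun x _ => this x, ← Finset.sum_div, Finset.sum_add_distrib, ← h]
  ring

theorem mink {n k : ℕ} (hk : 1 ≤ k) (F G : (Fin n → Bool) → ℝ) (hF : ∀ x, 0 ≤ F x) (hG : ∀ x, 0 ≤ G x)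
    (α β : ℝ) (hα : 0 ≤ α) (hβ : 0 ≤ β) (h1 : cubeE n (fun x => F x^k) ≤ α^k)
    (h2 : cubeE n (fun x => G x^k) ≤ β^k) : cubeE n (fun x => (F x + G x)^k) ≤ (α+β)^k := by
  have hk0 : (k:ℝ) ≠ 0 := by positivity
  have hL := Real.Lp_add_le_of_nonneg (s := Finset.univ) (f := F) (g := G) (p := k)
    (by exact_mod_cast hk) (fun x _ => hF x) (fun x _ => hG x)
  simp only [Real.rpow_natCast] at hL
  unfold cubeE at *
  have hN : (0:ℝ) < 2^n := by positivity
  rw [div_le_iff₀ hN] at *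
  have b : ∀ (H : (Fin n → Bool) → ℝ) (γ : ℝ), (∀ x, 0 ≤ H x) → 0 ≤ γ → ∑ x, H x^k ≤ γ^k*2^n →
      (∑ x, H x^k)^(1/(k:ℝ)) ≤ γ * ((2:ℝ)^n)^(1/(k:ℝ)) := by
    intro H γ hH hγ h
    calc (∑ x, H x^k)^(1/(k:ℝ)) ≤ (γ^k*2^n)^(1/(k:ℝ)) := by
          apply Real.rpow_le_rpow _ h (by positivity)
          exact Finset.sum_nonneg fun x _ => pow_nonneg (hH x) _
      _ = _ := by
          rw [Real.mul_rpow (by positivity) (by positivity), one_div, Real.pow_rpow_inv_natCast hγ (by omega)]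
  have b1 := b F α hF hα h1
  have b2 := b G β hG hβ h2
  have hS : 0 ≤ ∑ x, (F x + G x)^k := Finset.sum_nonneg fun x _ => pow_nonneg (add_nonneg (hF x) (hG x)) _
  have : (∑ x, (F x + G x)^k)^(1/(k:ℝ)) ≤ (α+β) * ((2:ℝ)^n)^(1/(k:ℝ)) := by linarith
  have h3 := pow_le_pow_left₀ (by positivity) this k
  rw [mul_pow, one_div, Real.rpow_inv_natCast_pow hS (by omega), Real.rpow_inv_natCast_pow (by positivity) (by omega)] at h3
  exact h3

noncomputable def chi {n : ℕ} (a : Finset (Fin n) → ℝ) (s : Finset (Fin n)) (x : Fin n → Bool) : ℝ :=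
  ∑ S ∈ s.powerset, a S * ∏ i ∈ S, cubeSign (x i)

theorem chi_insert {n : ℕ} (a : Finset (Fin n) → ℝ) (s : Finset (Fin n)) (i : Fin n) (hi : i ∉ s)
    (x : Fin n → Bool) :
    chi a (insert i s) x = chi a s x + cubeSign (x i) * chi (fun S => a (insert i S)) s x := by
  unfold chi
  rw [Finset.sum_powerset_insert hi, Finset.mul_sum]
  congr 1
  apply Finset.sum_congr rfl
  intro S hS
  rw [Finset.prod_insert (fun h => hi (Finset.mem_powerset.1 hS h))]
  ring

theorem chi_update {n : ℕ} (a : Finset (Fin n) → ℝ) (s : Finset (Fin n)) (i : Fin n) (hi : i ∉ s)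
    (x : Fin n → Bool) (b : Bool) : chi a s (Function.update x i b) = chi a s x := by
  unfold chi
  apply Finset.sum_congr rfl
  intro S hS
  congr 1
  apply Finset.prod_congr rfl
  intro j hj
  rw [Function.update_of_ne]
  rintro rfl
  exact hi (Finset.mem_powerset.1 hS hj)

theorem cubeE_const {n : ℕ} (c : ℝ) : cubeE n (fun _ => c) = c := by
  simp [cubeE]

theorem hyper_s11 {n k : ℕ} (hk : 1 ≤ k) (c : ℝ) (hc : 4 * (k:ℝ) ≤ c) (s : Finset (Fin n)) :
    ∀ a : Finset (Fin n) → ℝ,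
    cubeE n (fun x => (chi a s x ^ 2)^k) ≤ (∑ S ∈ s.powerset, c^S.card * a S^2)^k := by
  have hc0 : 0 ≤ c := le_trans (by positivity) hc
  induction s using Finset.induction_on with
  | empty => intro a; simp [chi, cubeE_const]
  | insert i s hi ih =>
    intro a
    rw [cubeE_flip i]
    have hstep : ∀ x, ((chi a (insert i s) (Function.update x i true) ^ 2)^k +
        (chi a (insert i s) (Function.update x i false) ^ 2)^k)/2 ≤
        (chi a s x ^2 + c * chi (fun S => a (insert i S)) s x^2)^k := by
      intro x
      simp only [chi_insert _ _ _ hi, chi_update _ _ _ hi]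
      have := (tp_aux (chi a s x) (chi (fun S => a (insert i S)) s x) c k hc).2.2
      simp only [← pow_mul]
      simpa [cubeSign, sub_eq_add_neg] using this
    refine (cubeE_mono hstep).trans ?_
    rw [Finset.sum_powerset_insert hi]
    apply mink hk _ _ (fun x => sq_nonneg _) (fun x => by positivity)
    · exact Finset.sum_nonneg fun S _ => by positivity
    · exact Finset.sum_nonneg fun S _ => by positivity
    · exact ih a
    · simp only [mul_pow]
      rw [cubeE_mul]
      have := mul_le_mul_of_nonneg_left (ih (fun S => a (insert i S))) (pow_nonneg hc0 k)
      refine this.trans (le_of_eq ?_)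
      rw [← mul_pow, Finset.mul_sum]
      congr 1
      apply Finset.sum_congr rfl
      intro S hS
      rw [Finset.card_insert_of_notMem (fun h => hi (Finset.mem_powerset.1 hS h))]
      ring

theorem parseval {n : ℕ} (s : Finset (Fin n)) :
    ∀ a : Finset (Fin n) → ℝ,
    cubeE n (fun x => chi a s x ^ 2) = ∑ S ∈ s.powerset, a S^2 := by
  induction s using Finset.induction_on with
  | empty => intro a; simp [chi, cubeE_const]
  | insert i s hi ih =>
    intro a
    rw [cubeE_flip i, Finset.sum_powerset_insert hi, ← ih, ← ih (fun S => a (insert i S)), ← cubeE_add]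
    congr 1
    funext x
    simp only [chi_insert _ _ _ hi, chi_update _ _ _ hi]
    simp [cubeSign]
    ring

theorem discDeriv_chi {n : ℕ} (a : Finset (Fin n) → ℝ) (i : Fin n) (x : Fin n → Bool) :
    discDeriv n (chi a Finset.univ) i x = chi (fun S => a (insert i S)) (Finset.univ.erase i) x := by
  have hi : i ∉ (Finset.univ.erase i : Finset (Fin n)) := Finset.notMem_erase _ _
  unfold discDeriv
  rw [← Finset.insert_erase (Finset.mem_univ i)]
  simp only [chi_insert _ _ _ hi, chi_update _ _ _ hi]
  simp [cubeSign]

theorem sum_B {n d : ℕ} (a : Finset (Fin n) → ℝ) (ha : ∀ S : Finset (Fin n), d < S.card → a S = 0)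
    (c : ℝ) (hc : 1 ≤ c) :
    ∑ i : Fin n, ∑ S ∈ (Finset.univ.erase i).powerset, c^S.card * a (insert i S)^2 ≤
      d * c^(d-1) * ∑ S, a S^2 := by
  have e : ∀ i : Fin n, ∑ S ∈ (Finset.univ.erase i).powerset, c^S.card * a (insert i S)^2
      = ∑ T : Finset (Fin n), if i ∈ T then c^(T.card-1) * a T^2 else 0 := by
    intro i
    have hi : i ∉ (Finset.univ.erase i : Finset (Fin n)) := Finset.notMem_erase _ _
    rw [← Finset.powerset_univ, ← Finset.insert_erase (Finset.mem_univ i), Finset.sum_powerset_insert hi]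
    have hz : ∑ T ∈ (Finset.univ.erase i).powerset, (if i ∈ T then c^(T.card-1) * a T^2 else 0) = 0 := by
      apply Finset.sum_eq_zero
      intro S hS
      have : i ∉ S := fun h => hi (Finset.mem_powerset.1 hS h)
      simp [this]
    rw [hz, zero_add]
    · simp only [Finset.insert_erase (Finset.mem_univ i)]
      apply Finset.sum_congr rfl
      intro S hS
      have : i ∉ S := fun h => hi (Finset.mem_powerset.1 hS h)
      simp [this]
  rw [Finset.sum_congr rfl fun i _ => e i, Finset.sum_comm, Finset.mul_sum]
  apply Finset.sum_le_sum
  intro T _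
  rw [← Finset.sum_filter, Finset.sum_const, nsmul_eq_mul]
  simp only [Finset.filter_mem_eq_inter, Finset.univ_inter]
  by_cases h : d < T.card
  · simp [ha T h]
  · push Not at h
    rw [← mul_assoc]
    gcongr

theorem mainpart {n d : ℕ} (hd : 1 ≤ d) (a : Finset (Fin n) → ℝ)
    (ha : ∀ S : Finset (Fin n), d < S.card → a S = 0) (U : Finset (Fin n → Bool)) (hU : U.Nonempty)
    (k : ℕ) (hk : 1 ≤ k) (hkU : (2:ℝ)^n ≤ U.card * Real.exp (d * k)) :
    ∑ i, ∑ x ∈ U, discDeriv n (chi a Finset.univ) i x ^2 ≤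
      U.card * Real.exp d * (d * (4*k)^(d-1) * cubeE n (fun x => chi a Finset.univ x ^2)) := by
  rw [parseval, Finset.powerset_univ]
  have hk1 : (1:ℝ) ≤ k := by exact_mod_cast hk
  refine le_trans ?_ (mul_le_mul_of_nonneg_left (sum_B a ha (4*k) (by linarith)) (by positivity))
  rw [Finset.mul_sum]
  apply Finset.sum_le_sum
  intro i _
  simp only [discDeriv_chi]
  have hy := hyper_s11 hk (4*k) le_rfl (Finset.univ.erase i) (fun S => a (insert i S))
  set B := ∑ S ∈ (Finset.univ.erase i).powerset, (4*(k:ℝ))^S.card * a (insert i S)^2 with hB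
  have hB0 : 0 ≤ B := Finset.sum_nonneg fun S _ => by positivity
  set F := fun x => chi (fun S => a (insert i S)) (Finset.univ.erase i) x ^ 2 with hF
  have hF0 : ∀ x, 0 ≤ F x := fun x => sq_nonneg _
  change ∑ x ∈ U, F x ≤ _
  have hN : (0:ℝ) < U.card := by exact_mod_cast hU.card_pos
  apply le_of_pow_le_pow_left₀ (n := k) (by omega) (by positivity)
  obtain ⟨l, rfl⟩ : ∃ l, k = l+1 := ⟨k-1, by omega⟩
  have pm := pow_sum_div_card_le_sum_pow (s := U) (f := F) (fun x _ => hF0 x) l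
  rw [div_le_iff₀ (by positivity)] at pm
  have h1 : ∑ x ∈ U, F x^(l+1) ≤ B^(l+1) * 2^n := by
    unfold cubeE at hy
    rw [div_le_iff₀ (by positivity)] at hy
    refine le_trans ?_ hy
    exact Finset.sum_le_sum_of_subset_of_nonneg (Finset.subset_univ _) fun x _ _ => pow_nonneg (hF0 x) _
  calc (∑ x ∈ U, F x)^(l+1) ≤ (∑ x ∈ U, F x^(l+1)) * U.card^l := pm
    _ ≤ (B^(l+1) * (U.card * Real.exp (d * (l+1:ℕ)))) * U.card^l := by gcongr; exact h1.trans (by gcongr)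
    _ = _ := by
      rw [mul_comm (d:ℝ), Real.exp_nat_mul]
      ring

theorem grad_trunc {n : ℕ} (P : (Fin n → Bool) → ℝ) (t : ℝ) (i : Fin n) :
    ∑ x, discDeriv n (fun x => max (P x - t) 0) i x ^2 ≤
    2 * ∑ x ∈ Finset.univ.filter (fun x => t < P x), discDeriv n P i x^2 := by
  have h := cubeE_flip i (fun x => if t < P x then discDeriv n P i x^2 else 0)
  unfold cubeE at h
  rw [div_left_inj' (by positivity)] at h
  rw [Finset.sum_filter, h, Finset.mul_sum]
  apply Finset.sum_le_sum
  intro x _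
  simp only [discDeriv, Function.update_idem]
  generalize P (Function.update x i true) = p
  generalize P (Function.update x i false) = q
  by_cases hp : t < p <;> by_cases hq : t < q
  · simp only [hp, hq, if_true]
    rw [max_eq_left (by linarith), max_eq_left (by linarith)]
    nlinarith [sq_nonneg (p-q)]
  · simp only [hp, hq, if_true, if_false]
    rw [max_eq_left (by linarith), max_eq_right (by linarith)]
    nlinarith [sq_nonneg (p-q)]
  · simp only [hp, hq, if_true, if_false]
    rw [max_eq_right (by linarith), max_eq_left (by linarith)]
    nlinarith [sq_nonneg (p-q)]
  · simp only [hp, hq, if_false]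
    rw [max_eq_right (by linarith), max_eq_right (by linarith)]
    simp

theorem ent_lower {n : ℕ} (f : (Fin n → Bool) → ℝ) (U : Finset (Fin n → Bool)) (hU : U.Nonempty)
    (hf : ∀ x, x ∉ U → f x = 0) :
    cubeE n (fun x => f x^2) * (-Real.log ((U.card:ℝ)/2^n)) ≤
    cubeE n (fun x => f x^2 * Real.log (f x^2)) -
      cubeE n (fun x => f x^2) * Real.log (cubeE n (fun x => f x^2)) := by
  set m := cubeE n (fun x => f x^2) with hm
  set ε := (U.card:ℝ)/2^n with hε
  have hε0 : 0 < ε := by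
    have : (0:ℝ) < U.card := by exact_mod_cast hU.card_pos
    positivity
  have hm0 : 0 ≤ m := cubeE_nonneg fun x => sq_nonneg _
  have hpt : ∀ x, f x^2 - (if x ∈ U then m/ε else 0) ≤
      f x^2 * Real.log (f x^2) + (Real.log ε - Real.log m) * f x^2 := by
    intro x
    by_cases hx : f x = 0
    · simp only [hx]
      split_ifs
      · simp; positivity
      · simp
    · have hxU : x ∈ U := by by_contra h; exact hx (hf x h)
      have hp : 0 < f x^2 := by positivity
      have hmp : 0 < m := by
        rw [hm]; unfold cubeE
        apply div_pos _ (by positivity)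
        exact Finset.sum_pos' (fun _ _ => sq_nonneg _) ⟨x, Finset.mem_univ _, hp⟩
      rw [if_pos hxU]
      have := Real.one_sub_inv_le_log_of_pos (x := f x^2 * ε / m) (by positivity)
      rw [Real.log_div (by positivity) (by positivity), Real.log_mul (by positivity) (by positivity)] at this
      have h2 := mul_le_mul_of_nonneg_left this hp.le
      have e : f x^2 * (1 - (f x^2 * ε / m)⁻¹) = f x^2 - m/ε := by field_simp
      rw [e] at h2
      linarith
  have h := cubeE_mono hpt
  rw [cubeE_add (fun x => f x^2 * Real.log (f x^2)), cubeE_mul (Real.log ε - Real.log m), ← hm] at h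
  have h0 : cubeE n (fun x => f x^2 - (if x ∈ U then m/ε else 0)) = 0 := by
    have : cubeE n (fun x => (if x ∈ U then m/ε else 0)) = m := by
      unfold cubeE
      rw [← Finset.sum_filter, Finset.sum_const, nsmul_eq_mul]
      simp only [Finset.filter_univ_mem]
      rw [mul_div_right_comm, ← hε]
      field_simp
    have e2 := cubeE_add (fun x => f x^2 - (if x ∈ U then m/ε else 0)) (fun x => if x ∈ U then m/ε else 0)
    simp only [sub_add_cancel] at e2
    linarith
  rw [h0] at h
  linarith

/-- Key estimate in the proof of the local tail bound: with
`U = {P > a_r}`, `ε = #U/2^n` and `h = max(P - a_r, 0)`,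
`E h² · |log ε| ≤ ε C^d max{1, (|log ε|/d)^{d-1}} · E|P(X)|²`. -/
theorem truncated_entropy_estimate :
    ∃ C : ℝ, 0 < C ∧
      ∀ (n d : ℕ), 1 ≤ n → 1 ≤ d →
        ∀ P : (Fin n → Bool) → ℝ, IsPolyDeg n d P →
          ∀ r : ℝ, 1 ≤ r →
            ∀ ar ar1 : ℝ, IsQuantile n P r ar → IsQuantile n P (r + 1) ar1 →
              ar < ar1 →
                cubeE n (fun x => (max (P x - ar) 0) ^ 2) *
                    |Real.log
                      (((Finset.univ.filter fun x : Fin n → Bool => ar < P x).card : ℝ) /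
                        2 ^ n)| ≤
                  (((Finset.univ.filter fun x : Fin n → Bool => ar < P x).card : ℝ) / 2 ^ n) *
                    C ^ d *
                    max 1
                      ((|Real.log
                            (((Finset.univ.filter fun x : Fin n → Bool => ar < P x).card : ℝ) /
                              2 ^ n)| / (d : ℝ)) ^ (d - 1)) *
                    cubeE n (fun x => (P x) ^ 2) := by
  refine ⟨16 * Real.exp 1, by positivity, ?_⟩
  rintro n d - hd P ⟨a, ha, hP⟩ - - t - - - -
  have hPe : P = chi a Finset.univ := by
    funext x; rw [hP]; simp [chi]
  clear hP
  set U := Finset.univ.filter (fun x : Fin n → Bool => t < P x) with hUdef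
  rcases U.eq_empty_or_nonempty with hU | hU
  · simp [hU]
  set ε := (U.card:ℝ)/2^n with hε
  have hN : (0:ℝ) < U.card := by exact_mod_cast hU.card_pos
  have h2n : (0:ℝ) < 2^n := by positivity
  have hε0 : 0 < ε := by positivity
  have hε1 : ε ≤ 1 := by
    rw [hε, div_le_one h2n]
    have : U.card ≤ 2^n := by
      simpa using U.card_le_univ
    exact_mod_cast this
  have habs : |Real.log ε| = -Real.log ε := abs_of_nonpos (Real.log_nonpos hε0.le hε1)
  set L := |Real.log ε| with hL
  have hL0 : 0 ≤ L := abs_nonneg _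
  have hd0 : (0:ℝ) < d := by exact_mod_cast hd
  set k := ⌊L/d⌋₊ + 1 with hk
  have hk1 : 1 ≤ k := by omega
  have hkL : L ≤ d * k := by
    have := (Nat.lt_floor_add_one (L/d)).le
    rw [div_le_iff₀ hd0] at this
    rw [hk]; push_cast; linarith
  have hkle : (k:ℝ) ≤ 2 * max 1 (L/d) := by
    have := Nat.floor_le (show 0 ≤ L/d by positivity)
    have h1 := le_max_left 1 (L/d)
    have h2 := le_max_right 1 (L/d)
    rw [hk]; push_cast; linarith
  have hkU : (2:ℝ)^n ≤ U.card * Real.exp (d * k) := by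
    have h1 : Real.exp L ≤ Real.exp (d*k) := Real.exp_le_exp.2 hkL
    have h2 : Real.exp L = 2^n / U.card := by
      rw [habs, Real.exp_neg, Real.exp_log hε0, hε, inv_div]
    rw [h2, div_le_iff₀ hN] at h1
    linarith
  have hmain := mainpart hd a ha U hU k hk1 hkU
  rw [← hPe] at hmain
  have hent := ent_lower (fun x => max (P x - t) 0) U hU (by
    intro x hx
    have : ¬ t < P x := by simpa [hUdef] using hx
    exact max_eq_right (by linarith))
  have hls := logsob n (fun x => max (P x - t) 0)
  rw [← hε, ← habs] at hent
  have hg : ∑ i, cubeE n (fun x => (discDeriv n (fun x => max (P x - t) 0) i x)^2) ≤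
      2 * (∑ i, ∑ x ∈ U, discDeriv n P i x ^2) / 2^n := by
    unfold cubeE
    rw [← Finset.sum_div, Finset.mul_sum]
    gcongr
    exact grad_trunc P t _
  have hEP : 0 ≤ cubeE n (fun x => P x^2) := cubeE_nonneg fun x => sq_nonneg _
  have hM : (max 1 (L/d))^(d-1) = max 1 ((L/d)^(d-1)) := by
    rcases le_total 1 (L/d) with h | h
    · rw [max_eq_right h, max_eq_right (one_le_pow₀ h)]
    · rw [max_eq_left h, max_eq_left (pow_le_one₀ (by positivity) h), one_pow]
  have hck : (4*(k:ℝ))^(d-1) ≤ 8^(d-1) * max 1 ((L/d)^(d-1)) := by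
    rw [← hM, ← mul_pow]
    exact pow_le_pow_left₀ (by positivity) (by linarith) _
  have hd2 : (d:ℝ) ≤ 2^d := by exact_mod_cast Nat.lt_two_pow_self.le
  calc cubeE n (fun x => (max (P x - t) 0) ^ 2) * L
      ≤ 4 * (2 * (U.card * Real.exp d * (d * (4*k)^(d-1) * cubeE n (fun x => P x ^2))) / 2^n) := by
        refine (hent.trans hls).trans ?_
        refine mul_le_mul_of_nonneg_left (hg.trans ?_) (by norm_num)
        gcongr
    _ = ε * (8 * Real.exp d * (d * (4*k)^(d-1))) * cubeE n (fun x => P x ^2) := by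
        rw [hε]; ring
    _ ≤ ε * (8 * Real.exp d * (2^d * (8^(d-1) * max 1 ((L/d)^(d-1))))) * cubeE n (fun x => P x ^2) := by
        gcongr
    _ = _ := by
        have e1 : Real.exp d = Real.exp 1 ^ d := by rw [← Real.exp_nat_mul, mul_one]
        have e2 : (8:ℝ)^d = 8 * 8^(d-1) := by rw [← pow_succ']; congr 1; omega
        have e3 : (16 * Real.exp 1)^d = 2^d * 8^d * Real.exp 1^d := by
          rw [← mul_pow, ← mul_pow]; norm_num
        rw [e3, e2, e1]
        ring
end
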